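/- Let k be a field of characteristic p, let q = p^e with e ≥ 1, let n ≥ 3, and let V_n be the k-subspace of k[x_0,…,x_{n−1}] spanned by the monomials x_i^q·x_j for 0 ≤ i, j ≤ n−1. If f ∈ V_n is divisible by each of three linearly independent linear forms ℓ₁, ℓ₂, ℓ₃, then f = 0. -/

import Mathlib

open MvPolynomial

/-!
The space of Frobenius forms is stable under linear changes of coordinates, because
`(∑ cᵢ xᵢ) ^ q = ∑ cᵢ ^ q xᵢ ^ q` when `q` is a power of the characteristic. Extending the three
linear forms to a basis of the space of linear forms and taking this basis as new coordinates, one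
may assume that they are three distinct variables. Every monomial of a polynomial divisible by
three distinct variables contains all three of them, whereas the monomials `x_i ^ q x_j` contain at
most two variables.
-/

section Coordinates

variable {σ τ ι R K : Type*} [CommRing R] [Field K]

lemma isSymmetricAlgebra_homogeneousSubmodule_one :
    IsSymmetricAlgebra (homogeneousSubmodule σ R 1).subtype := by
  let b : Module.Basis σ R (homogeneousSubmodule σ R 1) :=
    (Module.Basis.span (linearIndependent_X σ R)).map
      (LinearEquiv.ofEq _ _ homogeneousSubmodule_one_eq_span_X.symm)
  have hb (i : σ) : (b i : MvPolynomial σ R) = X i := by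
    simp [b, Module.Basis.span_apply]
  have h_constr : b.constr R X = (homogeneousSubmodule σ R 1).subtype :=
    b.ext fun i => by simp [hb]
  exact h_constr ▸ SymmetricAlgebra.IsSymmetricAlgebra.mvPolynomial σ b

/-- The linear change of coordinates taking a basis `b` of the space of linear forms as the new
variables. -/
noncomputable def linearFormCoordinates (b : Module.Basis τ R (homogeneousSubmodule σ R 1)) :
    MvPolynomial σ R ≃ₐ[R] MvPolynomial τ R :=
  isSymmetricAlgebra_homogeneousSubmodule_one.equiv.symm.trans
    (SymmetricAlgebra.equivMvPolynomial b)

lemma linearFormCoordinates_coe (b : Module.Basis τ R (homogeneousSubmodule σ R 1))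
    (v : homogeneousSubmodule σ R 1) :
    linearFormCoordinates b v = b.constr R X v := by
  have h_symm := isSymmetricAlgebra_homogeneousSubmodule_one.equiv_symm_apply v
  rw [Submodule.subtype_apply] at h_symm
  rw [linearFormCoordinates, AlgEquiv.trans_apply, h_symm]
  exact SymmetricAlgebra.lift_ι_apply _ v

lemma linearFormCoordinates_basis (b : Module.Basis τ R (homogeneousSubmodule σ R 1)) (t : τ) :
    linearFormCoordinates b (b t) = X t := by
  rw [linearFormCoordinates_coe, Module.Basis.constr_basis]

lemma isHomogeneous_one_linearFormCoordinates
    (b : Module.Basis τ R (homogeneousSubmodule σ R 1)) {f : MvPolynomial σ R}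
    (hf : f.IsHomogeneous 1) : (linearFormCoordinates b f).IsHomogeneous 1 := by
  rw [linearFormCoordinates_coe b ⟨f, hf⟩, Module.Basis.constr_apply]
  exact (homogeneousSubmodule τ R 1).sum_mem fun t _ =>
    Submodule.smul_mem _ _ (isHomogeneous_X R t)

lemma basis_sumExtend_inl {D V : Type*} [DivisionRing D] [AddCommGroup V] [Module D V] {v : ι → V}
    (hv : LinearIndependent D v) (i : ι) : Module.Basis.sumExtend hv (Sum.inl i) = v i := by
  rw [Module.Basis.sumExtend, Module.Basis.reindex_apply, Module.Basis.extend_apply_self]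
  rfl

lemma exists_linearFormCoordinates_eq_X {ℓ : ι → MvPolynomial σ K}
    (hhom : ∀ i, (ℓ i).IsHomogeneous 1) (hli : LinearIndependent K ℓ) :
    ∃ (κ : Set (homogeneousSubmodule σ K 1))
      (b : Module.Basis (ι ⊕ κ) K (homogeneousSubmodule σ K 1)),
      ∀ i, linearFormCoordinates b (ℓ i) = X (Sum.inl i) := by
  let v (i : ι) : homogeneousSubmodule σ K 1 := ⟨ℓ i, hhom i⟩
  have hv : LinearIndependent K v := .of_comp (homogeneousSubmodule σ K 1).subtype hli
  refine ⟨_, Module.Basis.sumExtend hv, fun i => ?_⟩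
  rw [← linearFormCoordinates_basis, basis_sumExtend_inl]

end Coordinates

section FrobeniusForms

variable {σ τ R : Type*} [CommSemiring R] {p : ℕ} [ExpChar R p] {e q : ℕ}

variable (σ R q) in
/-- The space of Frobenius forms, spanned by the monomials `x_i ^ q * x_j`; for `σ = Fin n` it is
the space `V_n`. -/
noncomputable def frobeniusForms : Submodule R (MvPolynomial σ R) :=
  Submodule.span R {g | ∃ i j : σ, g = X i ^ q * X j}

lemma frobeniusForms_eq_mul :
    frobeniusForms σ R q =
      Submodule.span R (Set.range (X · ^ q)) * homogeneousSubmodule σ R 1 := by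
  rw [homogeneousSubmodule_one_eq_span_X, Submodule.span_mul_span, frobeniusForms]
  congr 1
  ext g
  simp [Set.mem_mul, eq_comm]

lemma pow_expChar_pow_mem_span_X_pow {u : MvPolynomial σ R} (hu : u.IsHomogeneous 1) :
    u ^ p ^ e ∈ Submodule.span R (Set.range fun i : σ => (X i : MvPolynomial σ R) ^ p ^ e) := by
  rw [← mem_homogeneousSubmodule, homogeneousSubmodule_one_eq_span_X] at hu
  induction hu using Submodule.span_induction with
  | mem x hx =>
    obtain ⟨i, rfl⟩ := hx
    exact Submodule.subset_span ⟨i, rfl⟩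
  | zero => simp [zero_pow (expChar_pow_pos R p e).ne']
  | add u v _ _ hu hv =>
    rw [add_pow_expChar_pow]
    exact add_mem hu hv
  | smul c u _ hu =>
    rw [smul_pow]
    exact Submodule.smul_mem _ _ hu

lemma map_mem_frobeniusForms (φ : MvPolynomial σ R →ₐ[R] MvPolynomial τ R)
    (hφ : ∀ i, (φ (X i)).IsHomogeneous 1) {f : MvPolynomial σ R}
    (hf : f ∈ frobeniusForms σ R (p ^ e)) : φ f ∈ frobeniusForms τ R (p ^ e) := by
  suffices frobeniusForms σ R (p ^ e) ≤ (frobeniusForms τ R (p ^ e)).comap φ.toLinearMap from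
    this hf
  refine Submodule.span_le.2 ?_
  rintro _ ⟨i, j, rfl⟩
  change φ (X i ^ p ^ e * X j) ∈ frobeniusForms τ R (p ^ e)
  rw [map_mul, map_pow, frobeniusForms_eq_mul]
  exact Submodule.mul_mem_mul (pow_expChar_pow_mem_span_X_pow (hφ i)) (hφ j)

lemma frobeniusForms_le_restrictSupport :
    frobeniusForms σ R q ≤ restrictSupport R {d | d.support.card ≤ 2} := by
  classical
  refine Submodule.span_le.2 ?_
  rintro _ ⟨i, j, rfl⟩
  rw [X_pow_eq_monomial, X, monomial_mul, SetLike.mem_coe, monomial_mem_restrictSupport]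
  left
  calc (Finsupp.single i q + Finsupp.single j 1).support.card
      ≤ ({i} ∪ {j} : Finset σ).card := Finset.card_le_card <| Finsupp.support_add.trans <|
          Finset.union_subset_union Finsupp.support_single_subset Finsupp.support_single_subset
    _ ≤ 2 := Finset.card_union_le _ _

lemma mem_support_of_X_dvd {f : MvPolynomial σ R} {t : σ} (hf : X t ∣ f) {d : σ →₀ ℕ}
    (hd : d ∈ f.support) : t ∈ d.support := by
  classical
  obtain ⟨g, rfl⟩ := hf
  by_contra ht
  exact mem_support_iff.1 hd (by rw [coeff_X_mul', if_neg ht])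

lemma eq_zero_of_mem_frobeniusForms_of_X_dvd {f : MvPolynomial σ R}
    (hf : f ∈ frobeniusForms σ R q) {s : Finset σ} (hs : 2 < s.card) (hdvd : ∀ t ∈ s, X t ∣ f) :
    f = 0 := by
  by_contra hne
  obtain ⟨d, hd⟩ := support_nonempty.2 hne
  have h_subset : s ⊆ d.support := fun t ht => mem_support_of_X_dvd (hdvd t ht) hd
  have h_card : d.support.card ≤ 2 := frobeniusForms_le_restrictSupport hf hd
  exact (hs.trans_le (Finset.card_le_card h_subset)).not_ge h_card

end FrobeniusForms

theorem three_independent_linear_factors_implies_zero_general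
    {σ k : Type*} [Field k] (p e : ℕ) [ExpChar k p] {f : MvPolynomial σ k}
    (hf : f ∈ frobeniusForms σ k (p ^ e)) {ℓ : Fin 3 → MvPolynomial σ k}
    (hhom : ∀ i, (ℓ i).IsHomogeneous 1) (hli : LinearIndependent k ℓ) (hdvd : ∀ i, ℓ i ∣ f) :
    f = 0 := by
  obtain ⟨κ, b, hb⟩ := exists_linearFormCoordinates_eq_X hhom hli
  let φ := linearFormCoordinates b
  have hφf : φ f ∈ frobeniusForms (Fin 3 ⊕ κ) k (p ^ e) :=
    map_mem_frobeniusForms φ.toAlgHom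
      (fun i => isHomogeneous_one_linearFormCoordinates b (isHomogeneous_X k i)) hf
  have hφdvd (i : Fin 3) : X (Sum.inl i) ∣ φ f := hb i ▸ map_dvd φ (hdvd i)
  have hφ_zero : φ f = 0 :=
    eq_zero_of_mem_frobeniusForms_of_X_dvd hφf
      (s := Finset.univ.map Function.Embedding.inl) (by simp) (by simpa using hφdvd)
  exact (map_eq_zero_iff φ φ.injective).1 hφ_zero

/-- A polynomial in `V_n = span {x_i^q x_j}` divisible by three linearly independent linear forms
is zero. -/
theorem three_independent_linear_factors_implies_zero
    (p : ℕ) (hp : p.Prime) (e : ℕ) (he : 1 ≤ e) (q : ℕ) (hq : q = p ^ e)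
    (k : Type) [Field k] [CharP k p] (n : ℕ) (hn : 3 ≤ n)
    (f : MvPolynomial (Fin n) k)
    (hf : f ∈ Submodule.span k
      {g : MvPolynomial (Fin n) k | ∃ i j : Fin n, g = X i ^ q * X j})
    (ℓ : Fin 3 → MvPolynomial (Fin n) k)
    (hhom : ∀ i, (ℓ i).IsHomogeneous 1)
    (hli : LinearIndependent k ℓ)
    (hdvd : ∀ i, ℓ i ∣ f) :
    f = 0 := by
  have : ExpChar k p := .prime hp
  exact three_independent_linear_factors_implies_zero_general p e (hq ▸ hf) hhom hli hdvd
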